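/- arXiv:2406.18802 — 2 statements merged into one kernel-verified Lean document; each statement's English description precedes it below -/
import Mathlib

section
/- (Corollary 1.) Assume (x,ω) ↦ φ(x,ω)² is integrable with respect to 𝒳₁ ⊗ Ω and with respect to 𝒳₂ ⊗ Ω, and that (x₁,x₂) ↦ K(x₁,x₂)² is (𝒳₁ ⊗ 𝒳₂)-integrable. Then the optimal variance satisfies the bound 𝒱̂ = ( ∫_W q_φ(ω) dΩ(ω) )² − ∫∫ K(x₁,x₂)² d𝒳₂(x₂) d𝒳₁(x₁) ≤ ∫∫ [ K(x₁,x₁) K(x₂,x₂) − K(x₁,x₂)² ] d𝒳₂(x₂) d𝒳₁(x₁). -/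
open MeasureTheory ENNReal NNReal

theorem cs_sqrt {W : Type*} [MeasurableSpace W] (Ω : Measure W) (A B : W → ℝ)
    (hA : Integrable A Ω) (hB : Integrable B Ω) (hA0 : ∀ ω, 0 ≤ A ω) (hB0 : ∀ ω, 0 ≤ B ω) :
    (∫ ω, Real.sqrt (A ω * B ω) ∂Ω) ^ 2 ≤ (∫ ω, A ω ∂Ω) * ∫ ω, B ω ∂Ω := by
  have key : ∀ C : W → ℝ, Integrable C Ω → (∀ ω, 0 ≤ C ω) →
      MemLp (fun ω => Real.sqrt (C ω)) (ENNReal.ofReal 2) Ω := by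
    intro C hC hC0
    have hm : AEStronglyMeasurable (fun ω => Real.sqrt (C ω)) Ω :=
      Real.continuous_sqrt.comp_aestronglyMeasurable hC.1
    have h2 : ENNReal.ofReal 2 = 2 := by norm_num
    rw [h2, memLp_two_iff_integrable_sq hm]
    simpa only [Real.sq_sqrt (hC0 _)] using hC
  have h := integral_mul_le_Lp_mul_Lq_of_nonneg (μ := Ω) Real.HolderConjugate.two_two
    (Filter.Eventually.of_forall fun ω => Real.sqrt_nonneg (A ω))
    (Filter.Eventually.of_forall fun ω => Real.sqrt_nonneg (B ω)) (key A hA hA0) (key B hB hB0)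
  simp only [Real.rpow_two, Real.sq_sqrt (hA0 _), Real.sq_sqrt (hB0 _), ← Real.sqrt_eq_rpow,
    ← Real.sqrt_mul (hA0 _)] at h
  have a0 : 0 ≤ ∫ ω, A ω ∂Ω := integral_nonneg hA0
  have b0 : 0 ≤ ∫ ω, B ω ∂Ω := integral_nonneg hB0
  calc _ ≤ (Real.sqrt (∫ ω, A ω ∂Ω) * Real.sqrt (∫ ω, B ω ∂Ω)) ^ 2 :=
        pow_le_pow_left₀ (integral_nonneg fun _ => Real.sqrt_nonneg _) h 2
    _ = _ := by rw [mul_pow, Real.sq_sqrt a0, Real.sq_sqrt b0]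

/-- **Corollary 1.**  The optimal variance
`𝒱̂ = (∫ qφ dΩ)² − ∫∫ K(x₁,x₂)² d𝒳₂ d𝒳₁` is bounded above by
`∫∫ [K(x₁,x₁) K(x₂,x₂) − K(x₁,x₂)²] d𝒳₂ d𝒳₁`. -/
theorem optimal_variance_upper_bound
    {W X : Type*} [MeasurableSpace W] [MeasurableSpace X]
    (μ : Measure W) [SigmaFinite μ]
    (pΩ : W → ℝ≥0) (hpΩ : Measurable pΩ)
    (hpΩ1 : ∫⁻ ω, (pΩ ω : ℝ≥0∞) ∂μ = 1)
    (Ω : Measure W) (hΩ : Ω = μ.withDensity fun ω => (pΩ ω : ℝ≥0∞))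
    (𝒳₁ 𝒳₂ : Measure X) [IsProbabilityMeasure 𝒳₁] [IsProbabilityMeasure 𝒳₂]
    (φ : X → W → ℝ) (hφ : Measurable (Function.uncurry φ))
    (K : X → X → ℝ)
    (hK : ∀ x₁ x₂ : X, K x₁ x₂ = ∫ ω, φ x₁ ω * φ x₂ ω ∂Ω)
    (qφ : W → ℝ)
    (hq : ∀ ω, qφ ω =
      Real.sqrt ((∫ x, φ x ω ^ 2 ∂𝒳₁) * (∫ x, φ x ω ^ 2 ∂𝒳₂)))
    (hsq₁ : Integrable (fun p : X × W => φ p.1 p.2 ^ 2) (𝒳₁.prod Ω))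
    (hsq₂ : Integrable (fun p : X × W => φ p.1 p.2 ^ 2) (𝒳₂.prod Ω))
    (hK2int : Integrable (fun p : X × X => K p.1 p.2 ^ 2) (𝒳₁.prod 𝒳₂)) :
    (∫ ω, qφ ω ∂Ω) ^ 2 - (∫ x₁, ∫ x₂, K x₁ x₂ ^ 2 ∂𝒳₂ ∂𝒳₁)
      ≤ ∫ x₁, ∫ x₂, (K x₁ x₁ * K x₂ x₂ - K x₁ x₂ ^ 2) ∂𝒳₂ ∂𝒳₁ := by
  have hprob : IsProbabilityMeasure Ω := by
    constructor
    rw [hΩ, withDensity_apply _ MeasurableSet.univ, Measure.restrict_univ, hpΩ1]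
  have hA : Integrable (fun ω => ∫ x, φ x ω ^ 2 ∂𝒳₁) Ω := hsq₁.integral_prod_right
  have hB : Integrable (fun ω => ∫ x, φ x ω ^ 2 ∂𝒳₂) Ω := hsq₂.integral_prod_right
  have hKd : ∀ x, K x x = ∫ ω, φ x ω ^ 2 ∂Ω := by
    intro x
    rw [hK]
    simp only [sq]
  have hk1 : Integrable (fun x => K x x) 𝒳₁ := by
    simp only [hKd]
    exact hsq₁.integral_prod_left
  have hk2 : Integrable (fun x => K x x) 𝒳₂ := by
    simp only [hKd]
    exact hsq₂.integral_prod_left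
  have e1 : ∫ x, K x x ∂𝒳₁ = ∫ ω, ∫ x, φ x ω ^ 2 ∂𝒳₁ ∂Ω := by
    simp only [hKd]
    exact integral_integral_swap hsq₁
  have e2 : ∫ x, K x x ∂𝒳₂ = ∫ ω, ∫ x, φ x ω ^ 2 ∂𝒳₂ ∂Ω := by
    simp only [hKd]
    exact integral_integral_swap hsq₂
  have hmul : Integrable (fun p : X × X => K p.1 p.1 * K p.2 p.2) (𝒳₁.prod 𝒳₂) :=
    hk1.mul_prod hk2
  have hR : ∫ x₁, ∫ x₂, (K x₁ x₁ * K x₂ x₂ - K x₁ x₂ ^ 2) ∂𝒳₂ ∂𝒳₁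
      = (∫ x, K x x ∂𝒳₁) * (∫ x, K x x ∂𝒳₂) - ∫ x₁, ∫ x₂, K x₁ x₂ ^ 2 ∂𝒳₂ ∂𝒳₁ := by
    have h1 := integral_prod _ (hmul.sub hK2int)
    have h2 := integral_prod _ hK2int
    have h3 := integral_prod_mul (μ := 𝒳₁) (ν := 𝒳₂) (fun x => K x x) (fun x => K x x)
    have h4 := integral_sub hmul hK2int
    simp only [Pi.sub_apply] at h1
    rw [← h1, ← h2, h4, h3]
  rw [hR, e1, e2]
  apply sub_le_sub_right
  have hA0 : ∀ ω, 0 ≤ ∫ x, φ x ω ^ 2 ∂𝒳₁ := fun ω => integral_nonneg fun x => sq_nonneg _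
  have hB0 : ∀ ω, 0 ≤ ∫ x, φ x ω ^ 2 ∂𝒳₂ := fun ω => integral_nonneg fun x => sq_nonneg _
  simp only [hq]
  exact cs_sqrt Ω _ _ hA hB hA0 hB0
end

section
/- (Representation independence.) Let Ω and Ω' be probability measures on measurable spaces W and W', and φ : X → W → ℝ, φ' : X → W' → ℝ be two random features representations of the same kernel K, i.e., K(x₁,x₂) = ∫ φ(x₁,ω) φ(x₂,ω) dΩ(ω) = ∫ φ'(x₁,ω') φ'(x₂,ω') dΩ'(ω') for all x₁, x₂. Suppose 𝒳₁ = 𝒳₂ = 𝒳 and the relevant square-integrability conditions hold for both representations ((x,ω) ↦ φ(x,ω)² integrable w.r.t. 𝒳 ⊗ Ω, (x,ω') ↦ φ'(x,ω')² integrable w.r.t. 𝒳 ⊗ Ω', and (x₁,x₂) ↦ K(x₁,x₂)² integrable w.r.t. 𝒳 ⊗ 𝒳). Then the optimal variances of the two representations are equal: ( ∫ q_φ dΩ )² − ∫∫ K² d𝒳 d𝒳 = ( ∫ q_{φ'} dΩ' )² − ∫∫ K² d𝒳 d𝒳. -/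
open MeasureTheory ENNReal NNReal

/-- The integral of `qφ` is the integral of the kernel over the diagonal. -/
theorem integral_q_eq_diag {W X : Type*} [MeasurableSpace W] [MeasurableSpace X]
    (Ω : Measure W) [IsProbabilityMeasure Ω] (𝒳 : Measure X) [IsProbabilityMeasure 𝒳]
    (φ : X → W → ℝ) (K : X → X → ℝ)
    (hK : ∀ x₁ x₂ : X, K x₁ x₂ = ∫ ω, φ x₁ ω * φ x₂ ω ∂Ω)
    (q : W → ℝ)
    (hq : ∀ ω, q ω = Real.sqrt ((∫ x, φ x ω ^ 2 ∂𝒳) * (∫ x, φ x ω ^ 2 ∂𝒳)))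
    (hsq : Integrable (fun p : X × W => φ p.1 p.2 ^ 2) (𝒳.prod Ω)) :
    ∫ ω, q ω ∂Ω = ∫ x, K x x ∂𝒳 := by
  have h1 : ∀ ω, q ω = ∫ x, φ x ω ^ 2 ∂𝒳 := fun ω => by
    rw [hq, Real.sqrt_mul_self (integral_nonneg fun x => sq_nonneg _)]
  have h2 : ∀ x, K x x = ∫ ω, φ x ω ^ 2 ∂Ω := fun x => by
    rw [hK]
    simp only [pow_two]
  simp only [h1, h2]
  exact (integral_integral_swap (f := fun x ω => φ x ω ^ 2) hsq).symm

/-- **Representation independence.**  If `(φ, Ω)` and `(φ', Ω')` are two random-features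
representations of the same kernel `K`, and `𝒳₁ = 𝒳₂ = 𝒳`, then (under the relevant
square-integrability conditions) the optimal variances of the two representations coincide:
`(∫ qφ dΩ)² − ∫∫ K² d𝒳 d𝒳 = (∫ qφ' dΩ')² − ∫∫ K² d𝒳 d𝒳`. -/
theorem representation_independence
    {W W' X : Type*} [MeasurableSpace W] [MeasurableSpace W'] [MeasurableSpace X]
    (Ω : Measure W) [IsProbabilityMeasure Ω]
    (Ω' : Measure W') [IsProbabilityMeasure Ω']
    (𝒳 : Measure X) [IsProbabilityMeasure 𝒳]
    (φ : X → W → ℝ) (hφ : Measurable (Function.uncurry φ))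
    (φ' : X → W' → ℝ) (hφ' : Measurable (Function.uncurry φ'))
    (K : X → X → ℝ)
    (hK : ∀ x₁ x₂ : X, K x₁ x₂ = ∫ ω, φ x₁ ω * φ x₂ ω ∂Ω)
    (hK' : ∀ x₁ x₂ : X, K x₁ x₂ = ∫ ω', φ' x₁ ω' * φ' x₂ ω' ∂Ω')
    (qφ : W → ℝ)
    (hq : ∀ ω, qφ ω =
      Real.sqrt ((∫ x, φ x ω ^ 2 ∂𝒳) * (∫ x, φ x ω ^ 2 ∂𝒳)))
    (qφ' : W' → ℝ)
    (hq' : ∀ ω', qφ' ω' =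
      Real.sqrt ((∫ x, φ' x ω' ^ 2 ∂𝒳) * (∫ x, φ' x ω' ^ 2 ∂𝒳)))
    (hsq : Integrable (fun p : X × W => φ p.1 p.2 ^ 2) (𝒳.prod Ω))
    (hsq' : Integrable (fun p : X × W' => φ' p.1 p.2 ^ 2) (𝒳.prod Ω'))
    (hK2int : Integrable (fun p : X × X => K p.1 p.2 ^ 2) (𝒳.prod 𝒳)) :
    (∫ ω, qφ ω ∂Ω) ^ 2 - (∫ x₁, ∫ x₂, K x₁ x₂ ^ 2 ∂𝒳 ∂𝒳)
      = (∫ ω', qφ' ω' ∂Ω') ^ 2 - (∫ x₁, ∫ x₂, K x₁ x₂ ^ 2 ∂𝒳 ∂𝒳) := by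
  rw [integral_q_eq_diag Ω 𝒳 φ K hK qφ hq hsq, integral_q_eq_diag Ω' 𝒳 φ' K hK' qφ' hq' hsq']
end
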